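/- arXiv:2002.01383 — 2 statements merged into one kernel-verified Lean document; each statement's English description precedes it below -/
import Mathlib

section
/- Let X be a complex Banach space, let 0 < θ ≤ π/2, let q > 2 and s ∈ (1,2), and set p := q(s-1)/s; assume p ≥ 1. Then there exists a constant C > 0, depending only on θ, q and s, such that for every R > 0 and every f in the Bergman space B^q_θ(X) one has ∫_0^R ‖f(t)‖_X^p dt ≤ C · R^{(2-s)/s} · ‖f‖_{B^q_θ(X)}^p; in particular the constant C_R := C^{1/p} R^{(2-s)/(sp)} in the trace estimate (∫_0^R ‖f(t)‖_X^p dt)^{1/p} ≤ C_R ‖f‖_{B^q_θ(X)} tends to 0 as R → 0⁺, since s < 2. -/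
open MeasureTheory Filter Set

/-- The open sector `Σ_θ` of angle `θ` in the complex plane. -/
def sector (θ : ℝ) : Set ℂ := {z : ℂ | z ≠ 0 ∧ |z.arg| < θ}

open scoped ENNReal

lemma aux_circle {X : Type*} [NormedAddCommGroup X] [NormedSpace ℂ X] [CompleteSpace X]
    (f : ℂ → X) (c : ℂ) (r ρ q : ℝ) (hq : 1 ≤ q) (hρ : 0 < ρ) (hr : ρ < r)
    (hf : DifferentiableOn ℂ f (Metric.ball c r)) :
    ENNReal.ofReal (2 * Real.pi) * ‖f c‖ₑ ^ q ≤
      ∫⁻ φ in Ioo (-Real.pi) Real.pi, ‖f (circleMap c ρ φ)‖ₑ ^ q := by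
  have hsub : Metric.closedBall c |ρ| ⊆ Metric.ball c r := by
    rw [abs_of_pos hρ]; exact Metric.closedBall_subset_ball hr
  have hcont : Continuous (fun φ => f (circleMap c ρ φ)) := by
    refine hf.continuousOn.comp_continuous (continuous_circleMap c ρ) fun φ => hsub ?_
    rw [abs_of_pos hρ]
    exact circleMap_mem_closedBall c hρ.le φ
  have h1 : Real.circleAverage f c ρ = f c := by
    apply DiffContOnCl.circleAverage
    exact (hf.mono hsub).diffContOnCl_ball subset_rfl
  have h2 : (∫ φ in Ioo (-Real.pi) Real.pi, f (circleMap c ρ φ)) = (2 * Real.pi) • f c := by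
    have hper : Function.Periodic (fun φ => f (circleMap c ρ φ)) (2 * Real.pi) := 
      fun φ => by simp [periodic_circleMap c ρ φ]
    have := hper.intervalIntegral_add_eq (-Real.pi) 0
    rw [← h1, Real.circleAverage_def, smul_smul, mul_inv_cancel₀ (by positivity), one_smul,
      ← integral_Ioc_eq_integral_Ioo, ← intervalIntegral.integral_of_le (by linarith [Real.pi_pos])]
    convert! this using 2
    · ring
    · ring
  set μ := (volume : Measure ℝ).restrict (Ioo (-Real.pi) Real.pi) with hμ
  have hμu : μ univ = ENNReal.ofReal (2 * Real.pi) := by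
    simp [hμ, two_mul]
  have h3 : ENNReal.ofReal (2 * Real.pi) * ‖f c‖ₑ ≤ ∫⁻ φ, ‖f (circleMap c ρ φ)‖ₑ ∂μ := by
    refine le_trans (le_of_eq ?_) (enorm_integral_le_lintegral_enorm _)
    rw [h2, enorm_smul, Real.enorm_eq_ofReal (by positivity)]
  have h4 := eLpNorm'_le_eLpNorm'_mul_rpow_measure_univ (μ := μ) (p := 1) (q := q) one_pos hq
    hcont.aestronglyMeasurable
  simp only [eLpNorm', hμu, ENNReal.rpow_one, div_one] at h4
  have h5 := ENNReal.rpow_le_rpow (h3.trans h4) (z := q) (by linarith)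
  set I := ∫⁻ φ, ‖f (circleMap c ρ φ)‖ₑ ^ q ∂μ
  set m := ENNReal.ofReal (2 * Real.pi) with hm
  have hm0 : m ≠ 0 := by simp [hm, Real.pi_pos]
  have hmt : m ≠ ⊤ := ENNReal.ofReal_ne_top
  have hq0 : 0 < q := by linarith
  rw [ENNReal.mul_rpow_of_nonneg _ _ hq0.le, ENNReal.mul_rpow_of_nonneg _ _ hq0.le,
    ← ENNReal.rpow_mul, ← ENNReal.rpow_mul, one_div, inv_mul_cancel₀ hq0.ne', ENNReal.rpow_one,
    show (1 - q⁻¹) * q = q - 1 by field_simp] at h5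
  have h6 : m ^ q = m ^ (q - 1) * m := by
    conv_rhs => rw [← ENNReal.rpow_one m, ← ENNReal.rpow_mul, one_mul]
    rw [← ENNReal.rpow_add _ _ hm0 hmt]; simp
  rw [h6, mul_assoc, mul_comm I] at h5
  exact (ENNReal.mul_le_mul_iff_right (by simp [hm0, hmt]) (by simp [hm0, hmt])).1 h5

lemma aux_disc {X : Type*} [NormedAddCommGroup X] [NormedSpace ℂ X] [CompleteSpace X]
    (f : ℂ → X) (c : ℂ) (r q : ℝ) (hq : 1 ≤ q) (hr : 0 < r)
    (hf : DifferentiableOn ℂ f (Metric.ball c r)) :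
    ENNReal.ofReal (Real.pi * r ^ 2) * ‖f c‖ₑ ^ q ≤
      ∫⁻ z in Metric.ball c r, ‖f z‖ₑ ^ q := by
  classical
  set G : ℂ → ℝ≥0∞ := (Metric.ball c r).indicator (fun z => ‖f z‖ₑ ^ q) with hG
  have hGm : Measurable G := by
    have : ContinuousOn (fun z => ‖f z‖ₑ ^ q) (Metric.ball c r) :=
      (ENNReal.continuous_rpow_const.comp continuous_enorm).comp_continuousOn hf.continuousOn
    rw [hG, ← Set.piecewise_eq_indicator]
    exact this.measurable_piecewise continuousOn_const Metric.isOpen_ball.measurableSet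
  rw [← lintegral_indicator Metric.isOpen_ball.measurableSet, ← hG,
    ← lintegral_add_left_eq_self G c, ← Complex.lintegral_comp_polarCoord_symm]
  rw [polarCoord_target, Measure.volume_eq_prod, ← Measure.prod_restrict]
  simp only [Complex.polarCoord_symm_apply, smul_eq_mul]
  rw [lintegral_prod _ (by fun_prop)]
  have hcm : ∀ ρ φ : ℝ, c + (ρ:ℂ) * (Real.cos φ + Real.sin φ * Complex.I) = circleMap c ρ φ := by
    intro ρ φ
    simp [circleMap, Complex.exp_mul_I]
  simp only [hcm]
  calc _ = ∫⁻ ρ in Ioo 0 r, ENNReal.ofReal ρ * (ENNReal.ofReal (2 * Real.pi) * ‖f c‖ₑ ^ q) := by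
        rw [lintegral_mul_const _ (by fun_prop), ← mul_assoc]
        congr 1
        rw [← ofReal_integral_eq_lintegral_ofReal, ← integral_Ioc_eq_integral_Ioo,
          ← intervalIntegral.integral_of_le hr.le, integral_id,
          ← ENNReal.ofReal_mul (p := (r ^ 2 - 0 ^ 2) / 2) (by simp; positivity)]
        · congr 1; ring
        · exact (continuous_id.integrableOn_Icc).mono_set Ioo_subset_Icc_self
        · exact (ae_restrict_mem measurableSet_Ioo).mono fun x hx => hx.1.le
    _ ≤ ∫⁻ ρ in Ioo 0 r, ∫⁻ φ in Ioo (-Real.pi) Real.pi, ENNReal.ofReal ρ * G (circleMap c ρ φ) := by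
        refine setLIntegral_mono' measurableSet_Ioo fun ρ hρ => ?_
        rw [lintegral_const_mul _ (by fun_prop)]
        gcongr
        refine (aux_circle f c r ρ q hq hρ.1 hρ.2 hf).trans (le_of_eq ?_)
        refine lintegral_congr fun φ => ?_
        rw [hG, indicator_of_mem]
        exact Metric.closedBall_subset_ball hρ.2 (circleMap_mem_closedBall c hρ.1.le φ)
    _ ≤ _ := lintegral_mono_set Ioo_subset_Ioi_self

lemma aux_weighted {X : Type*} [NormedAddCommGroup X] [NormedSpace ℂ X] [CompleteSpace X]
    (f : ℂ → X) (S : Set ℂ) (hS : MeasurableSet S) (c q : ℝ) (hq : 1 ≤ q) (hc : 0 < c)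
    (hc2 : c ≤ 1 / 2) (hsub : ∀ t : ℝ, 0 < t → Metric.ball (t : ℂ) (c * t) ⊆ S)
    (hf : DifferentiableOn ℂ f S) :
    ∫⁻ t in Ioi (0:ℝ), ENNReal.ofReal t * ‖f t‖ₑ ^ q ≤
      ENNReal.ofReal (2 / (Real.pi * c ^ 2)) * ∫⁻ z in S, ‖f z‖ₑ ^ q := by
  classical
  have hpi := Real.pi_pos
  set G : ℂ → ℝ≥0∞ := S.indicator (fun z => ‖f z‖ₑ ^ q) with hG
  have hGm : Measurable G := by
    have : ContinuousOn (fun z => ‖f z‖ₑ ^ q) S :=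
      (ENNReal.continuous_rpow_const.comp continuous_enorm).comp_continuousOn hf.continuousOn
    rw [hG, ← Set.piecewise_eq_indicator]
    exact this.measurable_piecewise continuousOn_const hS
  let A : Set (ℝ × ℂ) := {x | dist x.2 (x.1 : ℂ) < c * x.1}
  have hA : MeasurableSet A := by
    apply measurableSet_lt <;> fun_prop
  let W : ℝ × ℂ → ℝ≥0∞ := A.indicator (fun x => ENNReal.ofReal (1 / (Real.pi * c ^ 2 * x.1)))
  have hW : Measurable W := Measurable.indicator (by fun_prop) hA
  calc ∫⁻ t in Ioi (0:ℝ), ENNReal.ofReal t * ‖f t‖ₑ ^ q 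
      ≤ ∫⁻ t in Ioi (0:ℝ), ∫⁻ z, W (t, z) * G z := by
        refine setLIntegral_mono' measurableSet_Ioi fun t ht => ?_
        have ht : 0 < t := ht
        have hd := aux_disc f t (c * t) q hq (by positivity) (hf.mono (hsub t ht))
        calc ENNReal.ofReal t * ‖f t‖ₑ ^ q 
            = ENNReal.ofReal (1 / (Real.pi * c ^ 2 * t)) *
              (ENNReal.ofReal (Real.pi * (c * t) ^ 2) * ‖f t‖ₑ ^ q) := by
              rw [← mul_assoc, ← ENNReal.ofReal_mul (by positivity)]
              congr 2
              field_simp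
          _ ≤ ENNReal.ofReal (1 / (Real.pi * c ^ 2 * t)) *
              ∫⁻ z in Metric.ball (t : ℂ) (c * t), ‖f z‖ₑ ^ q := by gcongr
          _ = ∫⁻ z in Metric.ball (t : ℂ) (c * t), W (t, z) * G z := by
              rw [← lintegral_const_mul' _ _ ENNReal.ofReal_ne_top]
              refine setLIntegral_congr_fun Metric.isOpen_ball.measurableSet fun z hz => ?_
              have h1 : (t, z) ∈ A := hz
              simp only [W, hG, indicator_of_mem h1, indicator_of_mem (hsub t ht hz)]
          _ ≤ _ := setLIntegral_le_lintegral _ _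
    _ = ∫⁻ z, ∫⁻ t in Ioi (0:ℝ), W (t, z) * G z := by
        apply lintegral_lintegral_swap
        exact Measurable.aemeasurable (by fun_prop)
    _ ≤ ∫⁻ z, ENNReal.ofReal (2 / (Real.pi * c ^ 2)) * G z := by
        refine lintegral_mono fun z => ?_
        rw [lintegral_mul_const _ (by fun_prop)]
        gcongr
        calc ∫⁻ t in Ioi (0:ℝ), W (t, z) 
            ≤ ∫⁻ t in Ioi (0:ℝ), (Ioo (2 * ‖z‖ / 3) (2 * ‖z‖)).indicator
                (fun _ => ENNReal.ofReal (3 / (2 * Real.pi * c ^ 2 * ‖z‖))) t := by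
              refine setLIntegral_mono' measurableSet_Ioi fun t ht => ?_
              have ht : 0 < t := ht
              by_cases h : (t, z) ∈ A
              · have h' : dist z (t : ℂ) < c * t := h
                have h'' : dist z (t : ℂ) < t / 2 := by nlinarith
                rw [dist_eq_norm] at h''
                have e1 : ‖(t : ℂ)‖ = t := by simp [ht.le]
                have h1 := norm_sub_norm_le z (t : ℂ)
                have h2 := norm_sub_norm_le (t : ℂ) z
                rw [norm_sub_rev (t : ℂ) z] at h2
                rw [e1] at h1 h2
                have hz : 0 < ‖z‖ := by linarith
                rw [indicator_of_mem (by constructor <;> linarith)]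
                simp only [W, indicator_of_mem h]
                apply ENNReal.ofReal_le_ofReal
                rw [div_le_div_iff₀ (by positivity) (by positivity)]
                have : 0 < Real.pi * c ^ 2 := by positivity
                nlinarith
              · simp [W, indicator_of_notMem h]
          _ ≤ ∫⁻ t, (Ioo (2 * ‖z‖ / 3) (2 * ‖z‖)).indicator
                (fun _ => ENNReal.ofReal (3 / (2 * Real.pi * c ^ 2 * ‖z‖))) t :=
              setLIntegral_le_lintegral _ _
          _ ≤ _ := by
              rw [lintegral_indicator measurableSet_Ioo, setLIntegral_const, Real.volume_Ioo,
                ← ENNReal.ofReal_mul (by positivity)]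
              apply ENNReal.ofReal_le_ofReal
              rcases (norm_nonneg z).eq_or_lt with h | h
              · rw [← h]; simp; positivity
              · apply le_of_eq; field_simp; ring
    _ = _ := by
        rw [lintegral_const_mul _ hGm, hG, lintegral_indicator hS]

lemma aux_sector (θ : ℝ) (hθ0 : 0 < θ) : ∃ c : ℝ, 0 < c ∧ c ≤ 1 / 2 ∧
    ∀ t : ℝ, 0 < t → Metric.ball (t : ℂ) (c * t) ⊆ sector θ := by
  have h1 : ContinuousAt Complex.arg 1 := Complex.continuousAt_arg (by simp)
  have h2 : ∀ᶠ z in nhds (1:ℂ), |Complex.arg z| < θ := by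
    have := h1.abs.eventually_lt (continuousAt_const (y := θ)) (by simpa using hθ0)
    exact this
  obtain ⟨ε, hε, h⟩ := Metric.eventually_nhds_iff.1 h2
  refine ⟨min ε (1 / 2), by positivity, min_le_right _ _, fun t ht z hz => ?_⟩
  have hz' : dist z (t : ℂ) < min ε (1 / 2) * t := hz
  have e1 : ‖(t : ℂ)‖ = t := by simp [ht.le]
  have htc : (t : ℂ) ≠ 0 := by exact_mod_cast ht.ne'
  have hz1 : dist (z / t) 1 < min ε (1 / 2) := by
    rw [dist_eq_norm] at hz' ⊢
    rw [show z / (t:ℂ) - 1 = (z - t) / t by field_simp, norm_div, e1, div_lt_iff₀ ht]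
    exact hz'
  constructor
  · rintro rfl
    have := hz1.trans_le (min_le_right _ _)
    norm_num at this
  · have := h (hz1.trans_le (min_le_left _ _))
    rw [show z = (t : ℂ) * (z / t) by field_simp, Complex.arg_real_mul _ ht]
    exact this

lemma aux_measSector (θ : ℝ) : MeasurableSet (sector θ) := by
  have : sector θ = {0}ᶜ ∩ {z : ℂ | |z.arg| < θ} := rfl
  rw [this]
  refine (measurableSet_singleton _).compl.inter (measurableSet_lt ?_ measurable_const)
  exact _root_.continuous_abs.measurable.comp Complex.measurable_arg

lemma aux_main {X : Type*} [NormedAddCommGroup X] [NormedSpace ℂ X] [CompleteSpace X]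
    (θ q s p : ℝ) (hθ0 : 0 < θ) 
    (hq : 2 < q) (hs1 : 1 < s) (hs2 : s < 2)
    (hp : p = q * (s - 1) / s) :
    ∃ C > (0:ℝ),
      (∀ R > 0, ∀ f : ℂ → X,
        DifferentiableOn ℂ f (sector θ) →
        IntegrableOn (fun z => ‖f z‖ ^ q) (sector θ) →
        (∫ t in Ioo (0:ℝ) R, ‖f (t : ℂ)‖ ^ p) ≤
          C * R ^ ((2 - s) / s) * ((∫ z in sector θ, ‖f z‖ ^ q) ^ (1 / q)) ^ p) := by
  obtain ⟨c, hc, hc2, hsub⟩ := aux_sector θ hθ0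
  set K := 2 / (Real.pi * c ^ 2) with hK
  have hK0 : 0 < K := by have := Real.pi_pos; positivity
  have h2s : 0 < 2 - s := by linarith
  have hs0 : 0 < s := by linarith
  have hs1' : 0 < s - 1 := by linarith
  have hq0 : 0 < q := by linarith
  have hp0 : 0 < p := by rw [hp]; positivity
  refine ⟨(1 / (2 - s)) ^ (1 / s) * K ^ (p / q), by positivity, fun R hR f hf hint => ?_⟩
  have hconj : s.HolderConjugate (s / (s - 1)) := Real.HolderConjugate.conjExponent hs1
  have hpq : p / q = (s - 1) / s := by rw [hp]; field_simp
  have hcont : ContinuousOn (fun t : ℝ => f t) (Ioo 0 R) := by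
    refine hf.continuousOn.comp Complex.continuous_ofReal.continuousOn fun t ht => ?_
    exact hsub t ht.1 (Metric.mem_ball_self (mul_pos hc ht.1))
  have hmeas : AEMeasurable (fun t : ℝ => ‖f t‖ₑ) (volume.restrict (Ioo 0 R)) :=
    (continuous_enorm.comp_continuousOn hcont).aemeasurable measurableSet_Ioo
  set N := ∫ z in sector θ, ‖f z‖ ^ q with hN
  have hN0 : 0 ≤ N := integral_nonneg fun z => by positivity
  have hNe : ∫⁻ z in sector θ, ‖f z‖ₑ ^ q = ENNReal.ofReal N := by
    rw [hN, ofReal_integral_eq_lintegral_ofReal hint (ae_of_all _ fun z => by positivity)]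
    refine lintegral_congr fun z => ?_
    rw [← ofReal_norm, ENNReal.ofReal_rpow_of_nonneg (norm_nonneg _) hq0.le]
  have hw := aux_weighted f (sector θ) (aux_measSector θ) c q (by linarith) hc hc2 hsub hf
  rw [hNe, ← hK, ← ENNReal.ofReal_mul hK0.le] at hw
  have hw' := (lintegral_mono_set (μ := volume) (f := fun t : ℝ => ENNReal.ofReal t * ‖f t‖ₑ ^ q)
    (show Ioo 0 R ⊆ Ioi 0 from Ioo_subset_Ioi_self)).trans hw
  have hfirst : ∫⁻ t in Ioo 0 R, (ENNReal.ofReal t ^ (-(p / q))) ^ s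
      = ENNReal.ofReal (R ^ (2 - s) / (2 - s)) := by
    have hi : IntervalIntegrable (fun t : ℝ => t ^ (1 - s)) volume 0 R :=
      intervalIntegral.intervalIntegrable_rpow' (by linarith)
    have : ∫ t in Ioo 0 R, t ^ (1 - s) = R ^ (2 - s) / (2 - s) := by
      rw [← integral_Ioc_eq_integral_Ioo, ← intervalIntegral.integral_of_le hR.le,
        integral_rpow (Or.inl (by linarith)), show 1 - s + 1 = 2 - s by ring,
        Real.zero_rpow h2s.ne', sub_zero]
    rw [← this, ofReal_integral_eq_lintegral_ofReal]
    · refine setLIntegral_congr_fun measurableSet_Ioo fun t ht => ?_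
      rw [← ENNReal.rpow_mul, hpq, ENNReal.ofReal_rpow_of_pos ht.1]
      congr 2
      field_simp
      ring
    · exact ((intervalIntegrable_iff_integrableOn_Ioc_of_le hR.le).1 hi).mono_set Ioo_subset_Ioc_self
    · exact (ae_restrict_mem measurableSet_Ioo).mono fun x hx => Real.rpow_nonneg hx.1.le _
  have hH := ENNReal.lintegral_mul_le_Lp_mul_Lq (volume.restrict (Ioo 0 R)) hconj
    (f := fun t => ENNReal.ofReal t ^ (-(p / q)))
    (g := fun t => ENNReal.ofReal t ^ (p / q) * ‖f t‖ₑ ^ p)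
    (by fun_prop) (by fun_prop)
  rw [hfirst] at hH
  have e1 : ∫⁻ t in Ioo 0 R, ((fun t => ENNReal.ofReal t ^ (-(p / q))) *
      (fun t => ENNReal.ofReal t ^ (p / q) * ‖f t‖ₑ ^ p)) t = ∫⁻ t in Ioo 0 R, ‖f t‖ₑ ^ p := by
    refine setLIntegral_congr_fun measurableSet_Ioo fun t ht => ?_
    simp only [Pi.mul_apply]
    rw [← mul_assoc, ← ENNReal.rpow_add _ _ (by simpa using ht.1) ENNReal.ofReal_ne_top]
    simp
  have e2 : ∫⁻ t in Ioo 0 R, (ENNReal.ofReal t ^ (p / q) * ‖f t‖ₑ ^ p) ^ (s / (s - 1))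
      = ∫⁻ t in Ioo 0 R, ENNReal.ofReal t * ‖f t‖ₑ ^ q := by
    refine lintegral_congr fun t => ?_
    rw [ENNReal.mul_rpow_of_nonneg _ _ (by positivity), ← ENNReal.rpow_mul, ← ENNReal.rpow_mul,
      hpq, show (s - 1) / s * (s / (s - 1)) = 1 by field_simp,
      show p * (s / (s - 1)) = q by rw [hp]; field_simp, ENNReal.rpow_one]
  rw [e1, e2] at hH
  have hH2 : ∫⁻ t in Ioo 0 R, ‖f t‖ₑ ^ p ≤
      ENNReal.ofReal ((R ^ (2 - s) / (2 - s)) ^ (1 / s) * (K * N) ^ (p / q)) := by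
    refine hH.trans ?_
    rw [ENNReal.ofReal_mul (by positivity), ← ENNReal.ofReal_rpow_of_nonneg (by positivity) (by positivity),
      ← ENNReal.ofReal_rpow_of_nonneg (by positivity) (by positivity),
      show 1 / (s / (s - 1)) = p / q by rw [hpq]; field_simp]
    gcongr
  have hreal : (∫ t in Ioo (0:ℝ) R, ‖f (t : ℂ)‖ ^ p) = (∫⁻ t in Ioo 0 R, ‖f t‖ₑ ^ p).toReal := by
    rw [integral_eq_lintegral_of_nonneg_ae (ae_of_all _ fun z => by positivity)]
    · congr 1
      refine lintegral_congr fun z => ?_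
      rw [← ofReal_norm, ENNReal.ofReal_rpow_of_nonneg (norm_nonneg _) hp0.le]
    · exact (hcont.norm.rpow_const fun _ _ => Or.inr hp0.le).aestronglyMeasurable measurableSet_Ioo
  rw [hreal]
  refine (ENNReal.toReal_le_of_le_ofReal (by positivity) hH2).trans (le_of_eq ?_)
  rw [div_eq_mul_one_div, Real.mul_rpow (by positivity) (by positivity), 
    Real.mul_rpow hK0.le hN0, ← Real.rpow_mul hR.le, ← Real.rpow_mul hN0,
    show (2 - s) * (1 / s) = (2 - s) / s by ring, show 1 / q * p = p / q by ring]
  ring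

/-- quantitative trace estimate: there is `C > 0`, depending only on
`θ, q, s`, with `∫_0^R ‖f(t)‖^p dt ≤ C R^((2-s)/s) ‖f‖_{B^q_θ}^p` for all `R > 0`
and all `f` in the Bergman space; in particular `C_R := C^(1/p) R^((2-s)/(s p))`
tends to `0` as `R → 0⁺` and serves in the corresponding trace estimate. -/
theorem bergman_trace_estimate_quantitative {X : Type*} [NormedAddCommGroup X]
    [NormedSpace ℂ X] [CompleteSpace X]
    (θ q s p : ℝ) (hθ0 : 0 < θ) (hθ : θ ≤ Real.pi / 2)
    (hq : 2 < q) (hs1 : 1 < s) (hs2 : s < 2)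
    (hp : p = q * (s - 1) / s) (hp1 : 1 ≤ p) :
    ∃ C > (0:ℝ),
      (∀ R > 0, ∀ f : ℂ → X,
        DifferentiableOn ℂ f (sector θ) →
        IntegrableOn (fun z => ‖f z‖ ^ q) (sector θ) →
        (∫ t in Ioo (0:ℝ) R, ‖f (t : ℂ)‖ ^ p) ≤
          C * R ^ ((2 - s) / s) * ((∫ z in sector θ, ‖f z‖ ^ q) ^ (1 / q)) ^ p) ∧
      Tendsto (fun R : ℝ => C ^ (1 / p) * R ^ ((2 - s) / (s * p)))
        (nhdsWithin 0 (Ioi 0)) (nhds 0) ∧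
      (∀ R > 0, ∀ f : ℂ → X,
        DifferentiableOn ℂ f (sector θ) →
        IntegrableOn (fun z => ‖f z‖ ^ q) (sector θ) →
        (∫ t in Ioo (0:ℝ) R, ‖f (t : ℂ)‖ ^ p) ^ (1 / p) ≤
          C ^ (1 / p) * R ^ ((2 - s) / (s * p)) *
            (∫ z in sector θ, ‖f z‖ ^ q) ^ (1 / q)) := by
  obtain ⟨C, hC, h⟩ := aux_main (X := X) θ q s p hθ0 hq hs1 hs2 hp
  have hp0 : 0 < p := by linarith
  have h2s : 0 < 2 - s := by linarith
  have hs0 : 0 < s := by linarith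
  refine ⟨C, hC, h, ?_, fun R hR f hf hint => ?_⟩
  · have he : 0 < (2 - s) / (s * p) := by positivity
    have h1 : Tendsto (fun R : ℝ => R ^ ((2 - s) / (s * p))) (nhds 0) (nhds 0) := by
      have := (Real.continuousAt_rpow_const 0 ((2 - s) / (s * p)) (Or.inr he.le)).tendsto
      rwa [Real.zero_rpow he.ne'] at this
    have h2 := (h1.mono_left (nhdsWithin_le_nhds (s := Ioi 0))).const_mul (C ^ (1 / p))
    rwa [mul_zero] at h2
  · have hN0 : 0 ≤ ∫ z in sector θ, ‖f z‖ ^ q := integral_nonneg fun z => by positivity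
    have h1 : 0 ≤ ∫ t in Ioo (0:ℝ) R, ‖f (t : ℂ)‖ ^ p := integral_nonneg fun z => by positivity
    refine (Real.rpow_le_rpow h1 (h R hR f hf hint) (by positivity)).trans (le_of_eq ?_)
    rw [Real.mul_rpow (by positivity) (by positivity), Real.mul_rpow (by positivity) (by positivity),
      ← Real.rpow_mul hR.le, ← Real.rpow_mul (by positivity) p, mul_one_div_cancel hp0.ne',
      Real.rpow_one]
    congr 3
    field_simp
end

section
/- Let X be a complex Banach space, let 0 < θ ≤ π/2, let q > 2 and s ∈ (1,2), and set p := q(s−1)/s; assume p > 1. Then for every T > 0 there exists a constant C_T > 0, depending only on T, θ, q and s, with C_T → 0 as T → 0⁺, such that for every scalar kernel a in the Bergman space B^q_θ (i.e. a : Σ_θ → ℂ holomorphic with finite B^q_θ norm) and every strongly measurable h : [0,T] → X with ∫_0^T ‖h(s)‖_X^p ds < ∞, one has (∫_0^T ‖∫_0^t a(t−s) h(s) ds‖_X^p dt)^{1/p} ≤ T^{(p−1)/p} · C_T · ‖a‖_{B^q_θ} · (∫_0^T ‖h(s)‖_X^p ds)^{1/p}, where a(t−s) denotes the value of a at the positive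 real number t−s. -/
open MeasureTheory Filter Set

lemma bergman_circle (f : ℂ → ℂ) (c : ℂ) (R r : ℝ) (hr : 0 < r) (hrR : r < R)
    (hf : DifferentiableOn ℂ f (Metric.ball c R)) :
    ∫⁻ _ in Ioo (-Real.pi) Real.pi, ‖f c‖ₑ ≤
      ∫⁻ φ in Ioo (-Real.pi) Real.pi, ‖f (c + r * (Real.cos φ + Real.sin φ * Complex.I))‖ₑ := by
  have h1 : Real.circleAverage f c r = f c := by
    apply DiffContOnCl.circleAverage
    rw [abs_of_pos hr]
    apply DifferentiableOn.diffContOnCl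
    refine hf.mono ?_
    rw [closure_ball _ hr.ne']
    exact Metric.closedBall_subset_ball hrR
  rw [Real.circleAverage_eq_integral_add (-Real.pi)] at h1
  have hcirc : ∀ φ, circleMap c r φ = c + r * (Real.cos φ + Real.sin φ * Complex.I) := by
    intro φ
    simp [circleMap, Complex.exp_mul_I]
  have h2 : ∫ φ in (-Real.pi)..Real.pi, f (circleMap c r φ) = (2 * Real.pi) • f c := by
    rw [← h1, smul_smul, mul_inv_cancel₀ (by positivity), one_smul]
    rw [intervalIntegral.integral_comp_add_right (fun φ => f (circleMap c r φ))]
    congr 1 <;> ring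
  rw [intervalIntegral.integral_of_le (by linarith [Real.pi_pos]),
    integral_Ioc_eq_integral_Ioo] at h2
  have h3 := enorm_integral_le_lintegral_enorm (μ := volume.restrict (Ioo (-Real.pi) Real.pi))
    (fun φ => f (circleMap c r φ))
  rw [h2, enorm_smul] at h3
  simp_rw [hcirc] at h3
  refine le_trans (le_of_eq ?_) h3
  rw [setLIntegral_const, Real.volume_Ioo, mul_comm,
    Real.enorm_of_nonneg (by positivity)]
  congr 2
  ring

lemma bergman_submean (f : ℂ → ℂ) (c : ℂ) (R : ℝ)
    (hf : DifferentiableOn ℂ f (Metric.ball c R)) :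
    ‖f c‖ₑ * volume (Metric.ball c R) ≤ ∫⁻ z in Metric.ball c R, ‖f z‖ₑ := by
  classical
  have hball : ∀ w : ℂ, c + w ∈ Metric.ball c R ↔ w ∈ Metric.ball (0:ℂ) R := by
    intro w; simp
  set F : ℂ → ENNReal := (Metric.ball (0:ℂ) R).indicator (fun w => ‖f (c + w)‖ₑ) with hF
  set G : ℂ → ENNReal := (Metric.ball (0:ℂ) R).indicator (fun w => ‖f c‖ₑ) with hG
  have hm : MeasurableSet (Metric.ball (0:ℂ) R) := Metric.isOpen_ball.measurableSet
  have hFm : Measurable F := by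
    have : ContinuousOn (fun w => ‖f (c + w)‖ₑ) (Metric.ball (0:ℂ) R) := by
      apply ContinuousOn.enorm
      exact hf.continuousOn.comp (by fun_prop) (fun w hw => (hball w).2 hw)
    have := this.measurable_piecewise (g := fun _ => 0) continuousOn_const hm
    have e := piecewise_eq_indicator (s := Metric.ball (0:ℂ) R) (f := fun w => ‖f (c + w)‖ₑ)
    rw [hF, ← e]
    exact this
  have hGm : Measurable G := measurable_const.indicator hm
  have e1 : ∫⁻ z in Metric.ball c R, ‖f z‖ₑ = ∫⁻ w, F w := by
    rw [← lintegral_indicator Metric.isOpen_ball.measurableSet,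
      ← lintegral_add_left_eq_self _ c]
    congr 1
    ext w
    simp only [hF, indicator]
    simp
  have e2 : ‖f c‖ₑ * volume (Metric.ball c R) = ∫⁻ w, G w := by
    rw [hG, lintegral_indicator hm, setLIntegral_const, Complex.volume_ball, Complex.volume_ball]
  rw [e1, e2, ← Complex.lintegral_comp_polarCoord_symm F, ← Complex.lintegral_comp_polarCoord_symm G]
  have hT : polarCoord.target = Ioi (0:ℝ) ×ˢ Ioo (-Real.pi) Real.pi := rfl
  have hcont : Measurable (fun p : ℝ × ℝ => Complex.polarCoord.symm p) := by
    simp only [Complex.polarCoord_symm_apply]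
    fun_prop
  rw [hT, Measure.volume_eq_prod, ← Measure.prod_restrict, lintegral_prod, lintegral_prod]
  rotate_left
  · exact (((ENNReal.measurable_ofReal.comp measurable_fst)).mul (hFm.comp hcont)).aemeasurable
  · exact (((ENNReal.measurable_ofReal.comp measurable_fst)).mul (hGm.comp hcont)).aemeasurable
  apply setLIntegral_mono' measurableSet_Ioi
  intro r hr
  have hr : 0 < r := hr
  have hnorm : ∀ φ : ℝ, ‖(r : ℂ) * (Real.cos φ + Real.sin φ * Complex.I)‖ = r := by
    intro φ
    have := Complex.norm_exp_ofReal_mul_I φ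
    rw [Complex.exp_mul_I] at this
    rw [norm_mul, Complex.ofReal_cos, Complex.ofReal_sin, this]
    simp [abs_of_pos hr]
  simp only [smul_eq_mul, Complex.polarCoord_symm_apply]
  rw [lintegral_const_mul' _ _ ENNReal.ofReal_ne_top, lintegral_const_mul' _ _ ENNReal.ofReal_ne_top]
  refine mul_le_mul' le_rfl ?_
  by_cases hrR : r < R
  · have hb : ∀ φ : ℝ, (r : ℂ) * (Real.cos φ + Real.sin φ * Complex.I) ∈ Metric.ball (0:ℂ) R := by
      intro φ
      rw [mem_ball_zero_iff, hnorm]; exact hrR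
    simp only [hF, hG, indicator, hb, if_true]
    exact bergman_circle f c R r hr hrR hf
  · have hb : ∀ φ : ℝ, (r : ℂ) * (Real.cos φ + Real.sin φ * Complex.I) ∉ Metric.ball (0:ℂ) R := by
      intro φ
      rw [mem_ball_zero_iff, hnorm]; exact hrR
    simp only [hF, hG, indicator, hb, if_false]
    exact le_rfl

lemma sector_ball (θ : ℝ) (hθ0 : 0 < θ) : ∃ δ : ℝ, 0 < δ ∧ ∀ r : ℝ, 0 < r → Metric.ball (r : ℂ) (δ * r) ⊆ sector θ := by
  have h1 : ∀ᶠ z in nhds (1:ℂ), z ≠ 0 ∧ |z.arg| < θ := by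
    have hc : ContinuousAt (fun z : ℂ => |z.arg|) 1 :=
      (Complex.continuousAt_arg Complex.one_mem_slitPlane).abs
    refine (eventually_ne_nhds one_ne_zero).and (hc.eventually_lt_const ?_)
    simpa using hθ0
  obtain ⟨δ, hδ, h⟩ := Metric.eventually_nhds_iff_ball.1 h1
  refine ⟨δ, hδ, fun r hr z hz => ?_⟩
  have hr' : (r : ℂ) ≠ 0 := by exact_mod_cast hr.ne'
  have hz' : ((r⁻¹ : ℝ) : ℂ) * z ∈ Metric.ball (1:ℂ) δ := by
    rw [Metric.mem_ball, dist_eq_norm] at hz ⊢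
    have : ((r⁻¹ : ℝ) : ℂ) * z - 1 = ((r⁻¹ : ℝ) : ℂ) * (z - r) := by
      push_cast; field_simp
    rw [this, norm_mul, Complex.norm_real, Real.norm_of_nonneg (by positivity)]
    rw [inv_mul_lt_iff₀ hr, mul_comm]; exact hz
  have := h _ hz'
  rw [Complex.arg_real_mul _ (by positivity)] at this
  exact ⟨fun h0 => this.1 (by simp [h0]), this.2⟩

lemma bergman_pointwise (θ q : ℝ) (hθ0 : 0 < θ) (hq : 2 < q) : ∃ K : ℝ, 0 < K ∧ ∀ a : ℂ → ℂ,
    DifferentiableOn ℂ a (sector θ) →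
    IntegrableOn (fun z => ‖a z‖ ^ q) (sector θ) →
    ∀ r : ℝ, 0 < r → ‖a (r : ℂ)‖ ≤ K * (∫ z in sector θ, ‖a z‖ ^ q) ^ (1 / q) * r ^ (-(2 / q)) := by
  obtain ⟨δ, hδ, hsub⟩ := sector_ball θ hθ0
  refine ⟨(Real.pi * δ ^ 2) ^ (-(1 / q)), by positivity, ?_⟩
  intro a ha normInt r hr
  set N := ∫ z in sector θ, ‖a z‖ ^ q with hN
  have hq0 : 0 < q := by linarith
  have hB := hsub r hr
  have had := ha.mono hB
  have h1 := bergman_submean a r (δ * r) had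
  have hm : AEStronglyMeasurable a (volume.restrict (Metric.ball (r:ℂ) (δ * r))) :=
    had.continuousOn.aestronglyMeasurable Metric.isOpen_ball.measurableSet
  have hq1 : (1 : ENNReal) ≤ ENNReal.ofReal q := by
    rw [ENNReal.one_le_ofReal]; linarith
  have h2 := eLpNorm_le_eLpNorm_mul_rpow_measure_univ hq1 hm
  rw [eLpNorm_one_eq_lintegral_enorm, eLpNorm_eq_lintegral_rpow_enorm_toReal
    (by simpa using hq0) ENNReal.ofReal_ne_top, ENNReal.toReal_ofReal hq0.le] at h2
  have h3 : ∫⁻ z in Metric.ball (r:ℂ) (δ * r), ‖a z‖ₑ ^ q ≤ ENNReal.ofReal N := by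
    rw [hN, ofReal_integral_eq_lintegral_ofReal normInt (ae_of_all _ fun z => by positivity)]
    refine (lintegral_mono_set hB).trans (lintegral_mono fun z => ?_)
    rw [← ofReal_norm, ENNReal.ofReal_rpow_of_nonneg (norm_nonneg _) hq0.le]
  have hN0 : 0 ≤ N := integral_nonneg fun z => by positivity
  set V : ℝ := Real.pi * δ ^ 2 * r ^ 2 with hV
  have hVpos : 0 < V := by positivity
  have hvol : volume (Metric.ball (r:ℂ) (δ * r)) = ENNReal.ofReal V := by
    rw [Complex.volume_ball, hV, ← ENNReal.ofReal_pow (by positivity),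
      ← ENNReal.ofReal_coe_nnreal, ← ENNReal.ofReal_mul (by positivity)]
    congr 1
    simp; ring
  have h4 : ENNReal.ofReal (‖a r‖ * V) ≤ ENNReal.ofReal (N ^ (1 / q) * V ^ (1 - 1 / q)) := by
    rw [ENNReal.ofReal_mul (norm_nonneg _), ENNReal.ofReal_mul (p := N ^ (1 / q)) (by positivity), ofReal_norm, ← hvol]
    refine (h1.trans h2).trans ?_
    rw [Measure.restrict_apply_univ, hvol, ENNReal.toReal_one, div_one,
      ← ENNReal.ofReal_rpow_of_pos hVpos, ← ENNReal.ofReal_rpow_of_nonneg hN0 (by positivity)]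
    gcongr
  rw [ENNReal.ofReal_le_ofReal_iff (by positivity)] at h4
  have h5 : ‖a r‖ ≤ N ^ (1 / q) * V ^ (-(1 / q)) := by
    rw [sub_eq_add_neg, Real.rpow_add hVpos, Real.rpow_one] at h4
    have : ‖a r‖ * V ≤ (N ^ (1 / q) * V ^ (-(1 / q))) * V := by linarith
    exact le_of_mul_le_mul_right this hVpos
  refine h5.trans (le_of_eq ?_)
  have : r ^ (-(2 / q)) = (r ^ 2) ^ (-(1/q)) := by
    rw [← Real.rpow_natCast r 2, ← Real.rpow_mul hr.le]
    congr 1; push_cast; ring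
  rw [hV, Real.mul_rpow (by positivity) (by positivity), this]
  ring

lemma young_one (k H : ℝ → ENNReal) (hk : Measurable k) (hH : Measurable H) (p : ℝ) (hp : 1 < p) :
    ∫⁻ t, (∫⁻ u, k (t - u) * H u) ^ p ≤ (∫⁻ r, k r) ^ p * ∫⁻ u, H u ^ p := by
  have hp0 : 0 < p := by linarith
  have hpq : (p.conjExponent).HolderConjugate p := (Real.HolderConjugate.conjExponent hp).symm
  set q := p.conjExponent with hq
  have hq0 : 0 < q := hpq.pos
  have hM : ∀ t, ∫⁻ u, k (t - u) = ∫⁻ r, k r := fun t => lintegral_sub_left_eq_self k t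
  have hpt : ∀ t, (∫⁻ u, k (t - u) * H u) ^ p ≤ (∫⁻ r, k r) ^ (p - 1) * ∫⁻ u, k (t - u) * H u ^ p := by
    intro t
    have hkt : Measurable (fun u => k (t - u)) := by fun_prop
    have h := ENNReal.lintegral_mul_le_Lp_mul_Lq volume hpq
      (f := fun u => k (t - u) ^ (1 / q)) (g := fun u => k (t - u) ^ (1 / p) * H u)
      (by fun_prop) (by fun_prop)
    have e1 : ∀ u, ((fun u => k (t - u) ^ (1 / q)) * (fun u => k (t - u) ^ (1 / p) * H u)) u
        = k (t - u) * H u := by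
      intro u
      simp only [Pi.mul_apply]
      rw [← mul_assoc, ← ENNReal.rpow_add_of_nonneg _ _ (by positivity) (by positivity)]
      have : 1 / q + 1 / p = 1 := by simpa using hpq.inv_add_inv_eq_one
      rw [this, ENNReal.rpow_one]
    have e2 : ∀ u, (k (t - u) ^ (1 / q)) ^ q = k (t - u) := by
      intro u; rw [← ENNReal.rpow_mul, one_div_mul_cancel hq0.ne', ENNReal.rpow_one]
    have e3 : ∀ u, (k (t - u) ^ (1 / p) * H u) ^ p = k (t - u) * H u ^ p := by
      intro u
      rw [ENNReal.mul_rpow_of_nonneg _ _ hp0.le, ← ENNReal.rpow_mul,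
        one_div_mul_cancel hp0.ne', ENNReal.rpow_one]
    simp_rw [e1, e2, e3, hM t] at h
    refine (ENNReal.rpow_le_rpow h hp0.le).trans (le_of_eq ?_)
    rw [ENNReal.mul_rpow_of_nonneg _ _ hp0.le, ← ENNReal.rpow_mul, ← ENNReal.rpow_mul,
        one_div_mul_cancel hp0.ne', ENNReal.rpow_one]
    congr 2
    have : 1 / q = 1 - 1 / p := by
      have := hpq.inv_add_inv_eq_one
      simp only [one_div]; linarith
    rw [this]; field_simp
  calc ∫⁻ t, (∫⁻ u, k (t - u) * H u) ^ p
      ≤ ∫⁻ t, (∫⁻ r, k r) ^ (p - 1) * ∫⁻ u, k (t - u) * H u ^ p := lintegral_mono hpt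
    _ = (∫⁻ r, k r) ^ (p - 1) * ∫⁻ t, ∫⁻ u, k (t - u) * H u ^ p := by
        rw [lintegral_const_mul]
        exact Measurable.lintegral_prod_right' (f := fun x : ℝ × ℝ => k (x.1 - x.2) * H x.2 ^ p)
          (by fun_prop)
    _ = (∫⁻ r, k r) ^ (p - 1) * ∫⁻ u, ∫⁻ t, k (t - u) * H u ^ p := by
        rw [lintegral_lintegral_swap]
        exact Measurable.aemeasurable (by fun_prop)
    _ = (∫⁻ r, k r) ^ (p - 1) * ∫⁻ u, (∫⁻ r, k r) * H u ^ p := by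
        congr 1
        apply lintegral_congr
        intro u
        rw [lintegral_mul_const _ (by fun_prop), lintegral_sub_right_eq_self]
    _ = (∫⁻ r, k r) ^ p * ∫⁻ u, H u ^ p := by
        rw [lintegral_const_mul _ (by fun_prop), ← mul_assoc]
        congr 1
        conv_lhs => rw [← ENNReal.rpow_one (∫⁻ r, k r), ← ENNReal.rpow_mul]
        rw [← ENNReal.rpow_add_of_nonneg _ _ (by linarith) zero_le_one]
        congr 1; ring

/-- `L^p` estimate for the finite convolution with a Bergman-space
kernel: for every `T > 0` there is `C_T > 0` (depending only on `T, θ, q, s`),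
with `C_T → 0` as `T → 0⁺`, such that
`‖a ⋆ h‖_{L^p(0,T;X)} ≤ T^{(p-1)/p} C_T ‖a‖_{B^q_θ} ‖h‖_{L^p(0,T;X)}`. -/
theorem convolution_bergman_kernel_estimate {X : Type*} [NormedAddCommGroup X]
    [NormedSpace ℂ X] [CompleteSpace X]
    (θ q s p : ℝ) (hθ0 : 0 < θ) (hθ : θ ≤ Real.pi / 2)
    (hq : 2 < q) (hs1 : 1 < s) (hs2 : s < 2)
    (hp : p = q * (s - 1) / s) (hp1 : 1 < p) :
    ∃ C : ℝ → ℝ, (∀ T > 0, 0 < C T) ∧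
      Tendsto C (nhdsWithin 0 (Ioi 0)) (nhds 0) ∧
      ∀ T > 0, ∀ a : ℂ → ℂ,
        DifferentiableOn ℂ a (sector θ) →
        IntegrableOn (fun z => ‖a z‖ ^ q) (sector θ) →
        ∀ h : ℝ → X, StronglyMeasurable h →
          IntegrableOn (fun u => ‖h u‖ ^ p) (Ioc (0:ℝ) T) →
          (∫ t in Ioc (0:ℝ) T, ‖∫ u in Ioc (0:ℝ) t, a (((t - u : ℝ)) : ℂ) • h u‖ ^ p) ^ (1 / p) ≤
            T ^ ((p - 1) / p) * C T * (∫ z in sector θ, ‖a z‖ ^ q) ^ (1 / q) *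
              (∫ u in Ioc (0:ℝ) T, ‖h u‖ ^ p) ^ (1 / p) := by
  obtain ⟨K, hK, hpt⟩ := bergman_pointwise θ q hθ0 hq
  have hp0 : 0 < p := by linarith
  have hq0 : 0 < q := by linarith
  have hα : 0 < 1 - 2 / q := by
    rw [sub_pos, div_lt_one hq0]; exact hq
  have hβ : 0 < 1 / p - 2 / q := by
    have hs0 : 0 < s - 1 := by linarith
    have : 1 / p - 2 / q = (2 - s) / (q * (s - 1)) := by
      rw [hp]; field_simp; ring
    rw [this]
    have : 0 < 2 - s := by linarith
    positivity
  refine ⟨fun T => K / (1 - 2 / q) * T ^ (1 / p - 2 / q), fun T hT => by positivity, ?_, ?_⟩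
  · have h1 : Tendsto (fun T : ℝ => K / (1 - 2 / q) * T ^ (1 / p - 2 / q)) (nhds 0)
        (nhds (K / (1 - 2 / q) * 0 ^ (1 / p - 2 / q))) :=
      ((Real.continuousAt_rpow_const 0 _ (Or.inr hβ.le)).tendsto).const_mul _
    rw [Real.zero_rpow hβ.ne', mul_zero] at h1
    exact h1.mono_left nhdsWithin_le_nhds
  intro T hT a ha haint h hh forceInt
  have hpt := hpt a ha haint
  have hN0 : 0 ≤ (∫ z in sector θ, ‖a z‖ ^ q) ^ (1 / q) :=
    Real.rpow_nonneg (integral_nonneg fun z => by positivity) _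
  set N := (∫ z in sector θ, ‖a z‖ ^ q) ^ (1 / q) with hN
  set J := ∫ u in Ioc (0:ℝ) T, ‖h u‖ ^ p with hJ
  have hJ0 : 0 ≤ J := integral_nonneg fun z => by positivity
  set A := T ^ ((p - 1) / p) * (K / (1 - 2 / q) * T ^ (1 / p - 2 / q)) * N with hA
  have hA0 : 0 ≤ A := by positivity
  have hA' : A = K * N * (T ^ (1 - 2 / q) / (1 - 2 / q)) := by
    have : T ^ (1 - 2 / q) = T ^ ((p - 1) / p) * T ^ (1 / p - 2 / q) := by
      rw [← Real.rpow_add hT]; congr 1; field_simp; ring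
    rw [hA, this]; ring
  set k : ℝ → ENNReal := (Ioc (0:ℝ) T).indicator
    (fun r => ENNReal.ofReal (K * N * r ^ (-(2 / q)))) with hk
  set H : ℝ → ENNReal := (Ioc (0:ℝ) T).indicator (fun u => ‖h u‖ₑ) with hH
  have hkm : Measurable k := by
    refine Measurable.indicator ?_ measurableSet_Ioc
    fun_prop
  have hHm : Measurable H := hh.enorm.indicator measurableSet_Ioc
  have hkint : ∫⁻ r, k r = ENNReal.ofReal A := by
    have hi : IntervalIntegrable (fun r : ℝ => r ^ (-(2 / q))) volume 0 T :=
      intervalIntegral.intervalIntegrable_rpow' (by linarith)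
    have hi2 : IntegrableOn (fun r : ℝ => K * N * r ^ (-(2 / q))) (Ioc 0 T) :=
      ((intervalIntegrable_iff_integrableOn_Ioc_of_le hT.le).1 hi).const_mul _
    rw [hk, lintegral_indicator measurableSet_Ioc, ← ofReal_integral_eq_lintegral_ofReal hi2]
    · congr 1
      rw [integral_const_mul, ← intervalIntegral.integral_of_le hT.le,
        integral_rpow (Or.inl (by linarith)), hA']
      have : -(2 / q) + 1 = 1 - 2 / q := by ring
      rw [this, Real.zero_rpow hα.ne', sub_zero]
    · refine (ae_restrict_iff' measurableSet_Ioc).2 (ae_of_all _ fun r hr => ?_)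
      have : 0 < r := hr.1
      simp only [Pi.zero_apply]
      positivity
  have hHint : ∫⁻ u, H u ^ p = ENNReal.ofReal J := by
    rw [hJ, ofReal_integral_eq_lintegral_ofReal forceInt (ae_of_all _ fun u => by positivity),
      ← lintegral_indicator measurableSet_Ioc]
    apply lintegral_congr
    intro u
    by_cases hu : u ∈ Ioc (0:ℝ) T
    · simp only [hH, indicator_of_mem hu]
      rw [← ofReal_norm, ENNReal.ofReal_rpow_of_nonneg (norm_nonneg _) hp0.le]
    · simp only [hH, indicator_of_notMem hu]
      exact ENNReal.zero_rpow_of_pos hp0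
  have hconv : ∀ t ∈ Ioc (0:ℝ) T, ‖∫ u in Ioc (0:ℝ) t, a (((t - u : ℝ)) : ℂ) • h u‖ₑ ≤
      ∫⁻ u, k (t - u) * H u := by
    intro t ht
    refine (enorm_integral_le_lintegral_enorm _).trans ?_
    rw [← lintegral_indicator measurableSet_Ioc]
    have hne : ∀ᵐ u : ℝ, u ≠ t := Measure.ae_ne volume t
    refine lintegral_mono_ae (hne.mono fun u hu => ?_)
    by_cases hut : u ∈ Ioc (0:ℝ) t
    · have h1 : u ∈ Ioc (0:ℝ) T := ⟨hut.1, hut.2.trans ht.2⟩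
      have hlt : u < t := lt_of_le_of_ne hut.2 hu
      have h2 : t - u ∈ Ioc (0:ℝ) T := ⟨by linarith, by linarith [ht.2, hut.1]⟩
      simp only [hk, hH, indicator_of_mem hut, indicator_of_mem h1, indicator_of_mem h2]
      rw [enorm_smul]
      refine mul_le_mul' ?_ le_rfl
      rw [← ofReal_norm]
      exact ENNReal.ofReal_le_ofReal (hpt (t - u) h2.1)
    · simp only [indicator_of_notMem hut]
      exact zero_le
  set L := ∫ t in Ioc (0:ℝ) T, ‖∫ u in Ioc (0:ℝ) t, a (((t - u : ℝ)) : ℂ) • h u‖ ^ p with hL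
  have hL0 : 0 ≤ L := integral_nonneg fun z => by positivity
  have hmain : L ≤ A ^ p * J := by
    by_cases hI : IntegrableOn
        (fun t => ‖∫ u in Ioc (0:ℝ) t, a (((t - u : ℝ)) : ℂ) • h u‖ ^ p) (Ioc (0:ℝ) T)
    · rw [← ENNReal.ofReal_le_ofReal_iff (by positivity), ENNReal.ofReal_mul (by positivity),
        ← ENNReal.ofReal_rpow_of_nonneg hA0 hp0.le, ← hkint, ← hHint]
      refine le_trans ?_ (young_one k H hkm hHm p hp1)
      rw [hL, ofReal_integral_eq_lintegral_ofReal hI (ae_of_all _ fun u => by positivity)]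
      refine le_trans ?_ (setLIntegral_le_lintegral (Ioc (0:ℝ) T) _)
      refine setLIntegral_mono' measurableSet_Ioc fun t ht => ?_
      rw [← ENNReal.ofReal_rpow_of_nonneg (norm_nonneg _) hp0.le, ofReal_norm]
      exact ENNReal.rpow_le_rpow (hconv t ht) hp0.le
    · rw [hL, integral_undef hI]
      positivity
  calc L ^ (1 / p) ≤ (A ^ p * J) ^ (1 / p) := Real.rpow_le_rpow hL0 hmain (by positivity)
    _ = A * J ^ (1 / p) := by
      rw [Real.mul_rpow (by positivity) hJ0, ← Real.rpow_mul hA0, mul_one_div_cancel hp0.ne',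
        Real.rpow_one]
end
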